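/- Well-formedness of derived period addition: for every valid date D, every period p = (py, pm, pd), and every rounding mode r ∈ {↓, ↑}, the value D +r p is a valid date. -/

import Mathlib

/-- A value is either a date `(y, m, d)` (a triple of integers in the
Gregorian calendar) or the error element `⊥`. -/
inductive DValue : Type
  | date (y m d : ℤ) : DValue
  | bot : DValue
deriving DecidableEq

/-- `nb_days(y, m)`: the number of days of month `m` in year `y`
(meaningful for `1 ≤ m ≤ 12`). A year is leap iff it is divisible by 4
and not by 100, or divisible by 400. -/
def nbDays (y m : ℤ) : ℤ :=
  if m = 2 then (if (4 ∣ y ∧ ¬ (100 ∣ y)) ∨ 400 ∣ y then 29 else 28)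
  else if m = 4 ∨ m = 6 ∨ m = 9 ∨ m = 11 then 30
  else 31

theorem nbDays_bounds (y m : ℤ) : 28 ≤ nbDays y m ∧ nbDays y m ≤ 31 := by
  unfold nbDays; split_ifs <;> omega

/-- A date `(y, m, d)` is valid iff `1 ≤ m ≤ 12` and `1 ≤ d ≤ nb_days(y, m)`. -/
def ValidDate (y m d : ℤ) : Prop :=
  1 ≤ m ∧ m ≤ 12 ∧ 1 ≤ d ∧ d ≤ nbDays y m

/-- Year addition: `(y,m,d) +y n = (y+n,m,d)`; `⊥ +y n = ⊥`. -/
def DValue.addY : DValue → ℤ → DValue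
  | .date y m d, n => .date (y + n) m d
  | .bot, _ => .bot

/-- Month addition on a date `(y, m, d)` (with `⊥` for a month component
outside `[1,12]`):
`(y,m,d) +m n = (y,m+n,d)` if `1 ≤ m+n ≤ 12`,
`= (y+1,m,d) +m (n−12)` if `m+n > 12`, `= (y−1,m,d) +m (n+12)` if `m+n < 1`. -/
def addMonths (y m d n : ℤ) : DValue :=
  if _h : 1 ≤ m ∧ m ≤ 12 then
    if _h1 : 1 ≤ m + n ∧ m + n ≤ 12 then .date y (m + n) d
    else if _h2 : 12 < m + n then addMonths (y + 1) m d (n - 12)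
    else addMonths (y - 1) m d (n + 12)
  else .bot
termination_by (m + n - 12).toNat + (1 - (m + n)).toNat
decreasing_by all_goals omega

/-- Month addition on values: `⊥ +m n = ⊥`. -/
def DValue.addM : DValue → ℤ → DValue
  | .date y m d, n => addMonths y m d n
  | .bot, _ => .bot

/-- Day addition, following the rules:
for `(y,m,d)` with `1 ≤ d ≤ nb_days(y,m)`:
`(y,m,d) +d n = (y,m,d+n)` if `1 ≤ d+n ≤ nb_days(y,m)`;
`= ((y,m,1) +m 1) +d (n − (nb_days(y,m) − d) − 1)` if `d+n > nb_days(y,m)`;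
`= (y,m,1) +d (d−1+n)` if `d+n ≤ 0` and `d > 1`;
if `n+1 ≤ 0` then, letting `(y',m',d') = (y,m,1) +m (−1)`,
`(y,m,1) +d n = (y',m',1) +d (n + nb_days(y',m'))`.
If `d < 1` or `d > nb_days(y,m)` (or the month is out of range), the result is `⊥`. -/
def addDays (y m d n : ℤ) : DValue :=
  if _hm : 1 ≤ m ∧ m ≤ 12 then
    if _hd : 1 ≤ d ∧ d ≤ nbDays y m then
      if _h1 : 1 ≤ d + n ∧ d + n ≤ nbDays y m then .date y m (d + n)
      else if _h2 : nbDays y m < d + n then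
        match addMonths y m 1 1 with
        | .date y' m' _ => addDays y' m' 1 (n - (nbDays y m - d) - 1)
        | .bot => .bot
      else if _h3 : 1 < d then addDays y m 1 (d - 1 + n)
      else
        match _hprev : addMonths y m 1 (-1) with
        | .date y' m' _ => addDays y' m' 1 (n + nbDays y' m')
        | .bot => .bot
    else .bot
  else .bot
termination_by (if 0 ≤ n then n else 62 - n).toNat
decreasing_by
  · split_ifs <;> omega
  · split_ifs <;> omega
  · have h28 := nbDays_bounds y' m'
    split_ifs <;> omega

/-- Day addition on values: `⊥ +d n = ⊥`. -/
def DValue.addD : DValue → ℤ → DValue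
  | .date y m d, n => addDays y m d n
  | .bot, _ => .bot

/-- Rounding modes: down (`↓`), up (`↑`) and error (`⊥`). -/
inductive RMode : Type
  | down | up | err
deriving DecidableEq

/-- Rounding `rnd_r`: if `1 ≤ d ≤ nb_days(y,m)` then `rnd_r(y,m,d) = (y,m,d)`;
if `d > nb_days(y,m)` then `rnd_↓(y,m,d) = (y,m,nb_days(y,m))`,
`rnd_↑(y,m,d) = (y',m',1)` where `(y',m',d') = (y,m,d) +m 1`, and
`rnd_⊥(y,m,d) = ⊥`; if `d < 1` then `rnd_r(y,m,d) = ⊥`; `rnd_r(⊥) = ⊥`. -/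
def rnd (r : RMode) : DValue → DValue
  | .date y m d =>
    if 1 ≤ d ∧ d ≤ nbDays y m then .date y m d
    else if d < 1 then .bot
    else
      match r with
      | .down => .date y m (nbDays y m)
      | .up =>
        match addMonths y m d 1 with
        | .date y' m' _ => .date y' m' 1
        | .bot => .bot
      | .err => .bot
  | .bot => .bot

/-- A period `(py, pm, pd)`: a number of years, months and days. -/
structure Period : Type where
  py : ℤ
  pm : ℤ
  pd : ℤ
deriving DecidableEq

/-- Derived addition of a period with rounding mode `r`:
`e +r (py, pm, pd) = rnd_r((e +y py) +m pm) +d pd`. -/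
def addPeriod (r : RMode) (e : DValue) (p : Period) : DValue :=
  ((rnd r ((e.addY p.py).addM p.pm)).addD p.pd)

/-- Strict lexicographic order on dates. -/
def DateLt (y1 m1 d1 y2 m2 d2 : ℤ) : Prop :=
  y1 < y2 ∨ (y1 = y2 ∧ (m1 < m2 ∨ (m1 = m2 ∧ d1 < d2)))

/-- Large lexicographic order on dates. -/
def DateLe (y1 m1 d1 y2 m2 d2 : ℤ) : Prop :=
  y1 < y2 ∨ (y1 = y2 ∧ (m1 < m2 ∨ (m1 = m2 ∧ d1 ≤ d2)))

/-- Comparison lifted to values: it holds only between two dates. -/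
def DValue.lt : DValue → DValue → Prop
  | .date y1 m1 d1, .date y2 m2 d2 => DateLt y1 m1 d1 y2 m2 d2
  | _, _ => False

/-- Comparison lifted to values: it holds only between two dates. -/
def DValue.le : DValue → DValue → Prop
  | .date y1 m1 d1, .date y2 m2 d2 => DateLe y1 m1 d1 y2 m2 d2
  | _, _ => False

/-- A value is a valid date: it is not `⊥` and its components are valid. -/
def IsValidDate : DValue → Prop
  | .date y m d => ValidDate y m d
  | .bot => False

def yearOf : DValue → ℤ
  | .date y _ _ => y
  | .bot => 0

def monthOf : DValue → ℤ
  | .date _ m _ => m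
  | .bot => 0

def dayOf : DValue → ℤ
  | .date _ _ d => d
  | .bot => 0

/-- Date units: year, month, day. -/
inductive DUnit : Type
  | year | month | day
deriving DecidableEq

/-- Addition of `n` units to a value. -/
def addU : DUnit → DValue → ℤ → DValue
  | .year, v, n => v.addY n
  | .month, v, n => v.addM n
  | .day, v, n => v.addD n

/-- Componentwise addition of periods. -/
def Period.add (p q : Period) : Period :=
  ⟨p.py + q.py, p.pm + q.pm, p.pd + q.pd⟩

theorem addMonths_ok (y m d n : ℤ) (h : 1 ≤ m ∧ m ≤ 12) :
    ∃ y' m', addMonths y m d n = .date y' m' d ∧ 1 ≤ m' ∧ m' ≤ 12 := by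
  fun_induction addMonths y m d n with
  | case1 y n _ h1 => exact ⟨_, _, rfl, h1⟩
  | case2 y n _ h1 h2 ih => exact ih
  | case3 y n _ h1 h2 ih => exact ih
  | case4 y n h1 => exact absurd h h1

theorem addDays_ok (y m d n : ℤ) (h : ValidDate y m d) :
    IsValidDate (addDays y m d n) := by
  have key : ∀ y m, ValidDate y m 1 ↔ 1 ≤ m ∧ m ≤ 12 := by
    intro y m
    have := nbDays_bounds y m
    unfold ValidDate
    omega
  fun_induction addDays y m d n with
  | case1 y m d n hm hd h1 => exact ⟨hm.1, hm.2, h1⟩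
  | case2 y m d n hm hd h1 h2 y' m' x heq ih =>
    obtain ⟨a, b, e, hb⟩ := addMonths_ok y m 1 1 hm
    rw [e] at heq
    cases heq
    exact ih ((key _ _).2 hb)
  | case3 y m d n hm hd h1 h2 heq =>
    obtain ⟨a, b, e, hb⟩ := addMonths_ok y m 1 1 hm
    rw [e] at heq
    cases heq
  | case4 y m d n hm hd h1 h2 h3 ih => exact ih ((key _ _).2 hm)
  | case5 y m d n hm hd h1 h2 h3 y' m' x heq ih =>
    obtain ⟨a, b, e, hb⟩ := addMonths_ok y m 1 (-1) hm
    rw [e] at heq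
    cases heq
    exact ih ((key _ _).2 hb)
  | case6 y m d n hm hd h1 h2 h3 heq =>
    obtain ⟨a, b, e, hb⟩ := addMonths_ok y m 1 (-1) hm
    rw [e] at heq
    cases heq
  | case7 y m d n hm hd => exact absurd h.2.2 hd
  | case8 y m d n hm => exact absurd ⟨h.1, h.2.1⟩ hm

/-- **Well-formedness of derived period addition**: for every valid date `D`,
every period `p = (py, pm, pd)`, and every rounding mode `r ∈ {↓, ↑}`, the
value `D +r p` is a valid date. -/
theorem wellFormedness_addPeriod (y m d : ℤ) (p : Period) (r : RMode)
    (hr : r = RMode.down ∨ r = RMode.up) (h : ValidDate y m d) :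
    IsValidDate (addPeriod r (DValue.date y m d) p) := by
  obtain ⟨hm1, hm2, hd1, hd2⟩ := h
  obtain ⟨a, b, e, hb⟩ := addMonths_ok (y + p.py) m d p.pm ⟨hm1, hm2⟩
  have hnb := nbDays_bounds a b
  simp only [addPeriod, DValue.addY, DValue.addM, e, rnd]
  split_ifs with h1 h2
  · exact addDays_ok _ _ _ _ ⟨hb.1, hb.2, h1⟩
  · omega
  · rcases hr with rfl | rfl
    · exact addDays_ok _ _ _ _ ⟨hb.1, hb.2, by omega, le_refl _⟩
    · obtain ⟨a', b', e', hb'⟩ := addMonths_ok a b d 1 hb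
      have hnb' := nbDays_bounds a' b'
      simp only [e']
      exact addDays_ok _ _ _ _ ⟨hb'.1, hb'.2, by omega, by omega⟩
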